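/- Let f : ℝ² → ℝ² be a C^∞ map with f(0)=0 which has corank one at 0, let λ be its Jacobian determinant, and let η be any null vector field for f. Then j³f(0) is A³-equivalent to the 3-jet at 0 of (x,y) ↦ (x, y³) if and only if dλ(0) = 0, the Hessian matrix H_λ(0) has rank 1, and (η²λ)(0) ≠ 0. -/

import Mathlib

open Filter Topology

noncomputable section

/-- Directional derivative of a scalar function. -/
def dop (v : ℝ × ℝ) (g : ℝ × ℝ → ℝ) : ℝ × ℝ → ℝ :=
  fun p => fderiv ℝ g p v

/-- Partial derivative operator in the first coordinate. -/
def pdx : (ℝ × ℝ → ℝ) → ℝ × ℝ → ℝ := dop (1, 0)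

/-- Partial derivative operator in the second coordinate. -/
def pdy : (ℝ × ℝ → ℝ) → ℝ × ℝ → ℝ := dop (0, 1)

/-- Taylor coefficient `a_{ij} = ∂_x^i ∂_y^j g(0,0) / (i! j!)` of `g` at the origin. -/
def tcoeff (g : ℝ × ℝ → ℝ) (i j : ℕ) : ℝ :=
  (pdx^[i] (pdy^[j] g)) 0 / (Nat.factorial i * Nat.factorial j)

/-- The Jacobian determinant `λ_f` of a map `f : ℝ² → ℝ²`. -/
def jacDet (f : ℝ × ℝ → ℝ × ℝ) (p : ℝ × ℝ) : ℝ :=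
  (fderiv ℝ f p (1, 0)).1 * (fderiv ℝ f p (0, 1)).2 -
    (fderiv ℝ f p (1, 0)).2 * (fderiv ℝ f p (0, 1)).1

/-- `f` has corank one at `0` : the derivative of `f` at `0` has rank one. -/
def CorankOne (f : ℝ × ℝ → ℝ × ℝ) : Prop :=
  LinearMap.rank ((fderiv ℝ f 0).toLinearMap) = 1

/-- `η` is a null vector field for `f` near `0`. -/
def IsNullVF (f η : ℝ × ℝ → ℝ × ℝ) : Prop :=
  η 0 ≠ 0 ∧ ∃ U ∈ 𝓝 (0 : ℝ × ℝ),
    ContDiffOn ℝ (⊤ : ℕ∞) η U ∧ ∀ p ∈ U, jacDet f p = 0 → fderiv ℝ f p (η p) = 0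

/-- The derivative `(ηg)(p) = Dg(p)(η(p))` of `g` along the vector field `η`. -/
def etaD (η : ℝ × ℝ → ℝ × ℝ) (g : ℝ × ℝ → ℝ) : ℝ × ℝ → ℝ :=
  fun p => fderiv ℝ g p (η p)

/-- The iterated derivative `η^k g` along the vector field `η`. -/
def etaIter (η : ℝ × ℝ → ℝ × ℝ) : ℕ → (ℝ × ℝ → ℝ) → ℝ × ℝ → ℝ
  | 0, g => g
  | k + 1, g => etaD η (etaIter η k g)

/-- The Hessian matrix of second partial derivatives of `g` at `0`. -/
def hess (g : ℝ × ℝ → ℝ) : Matrix (Fin 2) (Fin 2) ℝ :=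
  !![pdx (pdx g) 0, pdx (pdy g) 0; pdy (pdx g) 0, pdy (pdy g) 0]

/-- `A^r`-equivalence of the `r`-jets at `0` of two map-germs `(ℝ²,0) → (ℝ²,0)`. -/
def JetEquiv (r : ℕ) (f g : ℝ × ℝ → ℝ × ℝ) : Prop :=
  ∃ φ ψ : ℝ × ℝ → ℝ × ℝ,
    ContDiff ℝ (⊤ : ℕ∞) φ ∧ ContDiff ℝ (⊤ : ℕ∞) ψ ∧ φ 0 = 0 ∧ ψ 0 = 0 ∧
    Function.Bijective (⇑(fderiv ℝ φ 0)) ∧ Function.Bijective (⇑(fderiv ℝ ψ 0)) ∧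
    ∀ i ≤ r, iteratedFDeriv ℝ i (ψ ∘ f ∘ φ) 0 = iteratedFDeriv ℝ i g 0

/-- `A`-equivalence of two map-germs `(ℝ²,0) → (ℝ²,0)`. -/
def AEquiv (f g : ℝ × ℝ → ℝ × ℝ) : Prop :=
  ∃ φ ψ : ℝ × ℝ → ℝ × ℝ,
    ContDiff ℝ (⊤ : ℕ∞) φ ∧ ContDiff ℝ (⊤ : ℕ∞) ψ ∧ φ 0 = 0 ∧ ψ 0 = 0 ∧
    Function.Bijective (⇑(fderiv ℝ φ 0)) ∧ Function.Bijective (⇑(fderiv ℝ ψ 0)) ∧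
    ∀ᶠ p in 𝓝 (0 : ℝ × ℝ), ψ (f (φ p)) = g p

/-- `f` has the form `(x, g(x,y))` where `g` is `C^∞` and the Taylor coefficients of `g`
of total degree `< N` at the origin are prescribed by `P`. -/
def HasForm (f : ℝ × ℝ → ℝ × ℝ) (g : ℝ × ℝ → ℝ) (N : ℕ) (P : ℕ → ℕ → ℝ) : Prop :=
  ContDiff ℝ (⊤ : ℕ∞) g ∧ (∀ p, f p = (p.1, g p)) ∧
    ∀ i j, i + j < N → tcoeff g i j = P i j

/-!
Multiplying and composing with coordinate changes, `λ_{ψ ∘ f ∘ φ}` is a unit times `λ_f ∘ φ`. Hence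
being a critical point of `λ` at which the Hessian is degenerate but does not vanish on `ker Df(0)`
is invariant, it depends only on the `3`-jet, and it holds for `(x, y³)`, where `λ = 3 y²`. As `λ`
is critical at `0`, `(η²λ)(0)` is the Hessian evaluated at `η(0) ∈ ker Df(0)`.

Conversely, linear coordinate changes bring the derivative of `f` into the form `(x, 0)` and the
Hessian of `λ` into the form `c dy²`. The inverse function theorem straightens the first component
of `f` to `x`, without changing the linear data. Then `λ = ∂_y f₂`, so once `f₂(x, 0)` has been
subtracted from the second component, the `2`-jet of `λ` determines the `3`-jet of `f`.
-/

open scoped ContDiff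

section Jets

variable {𝕜 E F G : Type*} [NontriviallyNormedField 𝕜] [NormedAddCommGroup E] [NormedSpace 𝕜 E]
  [NormedAddCommGroup F] [NormedSpace 𝕜 F] [NormedAddCommGroup G] [NormedSpace 𝕜 G]
  {f g h : E → F} {x : E} {k : ℕ}

variable (𝕜) in
/-- `f` and `g` have the same `k`-jet at `x`, expressed through iterated Fréchet derivatives. -/
def JetEq (k : ℕ) (f g : E → F) (x : E) : Prop :=
  ∀ i ≤ k, iteratedFDeriv 𝕜 i f x = iteratedFDeriv 𝕜 i g x

theorem jetEq_of_eventuallyEq (hfg : f =ᶠ[𝓝 x] g) : JetEq 𝕜 k f g x :=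
  fun i _ ↦ (hfg.iteratedFDeriv 𝕜 i).eq_of_nhds

theorem JetEq.symm (hfg : JetEq 𝕜 k f g x) : JetEq 𝕜 k g f x :=
  fun i hi ↦ (hfg i hi).symm

theorem JetEq.trans (hfg : JetEq 𝕜 k f g x) (hgh : JetEq 𝕜 k g h x) : JetEq 𝕜 k f h x :=
  fun i hi ↦ (hfg i hi).trans (hgh i hi)

theorem iteratedFDeriv_zero_eq_iff :
    iteratedFDeriv 𝕜 0 f x = iteratedFDeriv 𝕜 0 g x ↔ f x = g x := by
  simp only [iteratedFDeriv_zero_eq_comp, Function.comp_apply, EmbeddingLike.apply_eq_iff_eq]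

theorem JetEq.eq (hfg : JetEq 𝕜 k f g x) : f x = g x :=
  iteratedFDeriv_zero_eq_iff.1 (hfg 0 k.zero_le)

theorem jetEq_zero_iff : JetEq 𝕜 0 f g x ↔ f x = g x := by
  refine ⟨JetEq.eq, fun h i hi ↦ ?_⟩
  obtain rfl := Nat.le_zero.1 hi
  exact iteratedFDeriv_zero_eq_iff.2 h

theorem iteratedFDeriv_succ_eq_iff :
    iteratedFDeriv 𝕜 (k + 1) f x = iteratedFDeriv 𝕜 (k + 1) g x ↔
      iteratedFDeriv 𝕜 k (fderiv 𝕜 f) x = iteratedFDeriv 𝕜 k (fderiv 𝕜 g) x := by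
  simp only [iteratedFDeriv_succ_eq_comp_right, Function.comp_apply, EmbeddingLike.apply_eq_iff_eq]

theorem jetEq_succ_iff :
    JetEq 𝕜 (k + 1) f g x ↔ f x = g x ∧ JetEq 𝕜 k (fderiv 𝕜 f) (fderiv 𝕜 g) x := by
  refine ⟨fun h ↦ ⟨h.eq, fun i hi ↦ iteratedFDeriv_succ_eq_iff.1 (h _ (by lia))⟩,
    fun ⟨h₀, h⟩ i hi ↦ ?_⟩
  cases i with
  | zero => exact iteratedFDeriv_zero_eq_iff.2 h₀
  | succ i => exact iteratedFDeriv_succ_eq_iff.2 (h i (by lia))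

theorem JetEq.fderiv (hfg : JetEq 𝕜 (k + 1) f g x) : JetEq 𝕜 k (fderiv 𝕜 f) (fderiv 𝕜 g) x :=
  (jetEq_succ_iff.1 hfg).2

theorem JetEq.comp_left {φ : F → G} (hfg : JetEq 𝕜 k f g x) (hφ : ContDiffAt 𝕜 k φ (f x))
    (hf : ContDiffAt 𝕜 k f x) (hg : ContDiffAt 𝕜 k g x) : JetEq 𝕜 k (φ ∘ f) (φ ∘ g) x := by
  intro i hi
  have hi' : (i : ℕ∞ω) ≤ k := by exact_mod_cast hi
  rw [iteratedFDeriv_comp hφ hf hi', iteratedFDeriv_comp (hfg.eq ▸ hφ) hg hi', ← hfg.eq]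
  refine Finset.sum_congr rfl fun c _ ↦ ?_
  have hparts : (fun m ↦ ftaylorSeries 𝕜 f x (c.partSize m)) =
      fun m ↦ ftaylorSeries 𝕜 g x (c.partSize m) :=
    funext fun m ↦ hfg _ ((c.partSize_le m).trans hi)
  simp only [FormalMultilinearSeries.compAlongOrderedFinpartition, hparts]

theorem JetEq.prodMk {f₁ f₂ : E → F} {g₁ g₂ : E → G} (hf : JetEq 𝕜 k f₁ f₂ x)
    (hg : JetEq 𝕜 k g₁ g₂ x) (hf₁ : ContDiffAt 𝕜 k f₁ x) (hf₂ : ContDiffAt 𝕜 k f₂ x)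
    (hg₁ : ContDiffAt 𝕜 k g₁ x) (hg₂ : ContDiffAt 𝕜 k g₂ x) :
    JetEq 𝕜 k (fun p ↦ (f₁ p, g₁ p)) (fun p ↦ (f₂ p, g₂ p)) x := by
  intro i hi
  have hi' : (i : ℕ∞ω) ≤ k := by exact_mod_cast hi
  rw [iteratedFDeriv_prodMk hf₁ hg₁ hi', iteratedFDeriv_prodMk hf₂ hg₂ hi', hf i hi, hg i hi]

end Jets

section Jacobian

variable {f g : ℝ × ℝ → ℝ × ℝ} {p : ℝ × ℝ}

/-- The determinant of a linear endomorphism of `ℝ²` as a polynomial in its entries; the Jacobian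
determinant is its composition with the derivative. -/
def entryDet (L : ℝ × ℝ →L[ℝ] ℝ × ℝ) : ℝ :=
  (L (1, 0)).1 * (L (0, 1)).2 - (L (1, 0)).2 * (L (0, 1)).1

theorem contDiff_entryDet : ContDiff ℝ ∞ entryDet := by
  unfold entryDet
  fun_prop

theorem entryDet_eq_det (L : ℝ × ℝ →L[ℝ] ℝ × ℝ) : entryDet L = LinearMap.det L.toLinearMap := by
  rw [← LinearMap.det_toMatrix (Module.Basis.finTwoProd ℝ), Matrix.det_fin_two]
  simp [entryDet, LinearMap.toMatrix_apply, mul_comm]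

theorem jacDet_eq_det : jacDet f p = LinearMap.det (fderiv ℝ f p).toLinearMap :=
  entryDet_eq_det _

theorem jacDet_ne_zero_iff : jacDet f p ≠ 0 ↔ Function.Bijective (fderiv ℝ f p) := by
  rw [jacDet_eq_det, ← isUnit_iff_ne_zero, ← LinearMap.isUnit_iff_isUnit_det,
    Module.End.isUnit_iff]
  rfl

theorem jacDet_comp (hg : DifferentiableAt ℝ g (f p)) (hf : DifferentiableAt ℝ f p) :
    jacDet (g ∘ f) p = jacDet g (f p) * jacDet f p := by
  rw [jacDet_eq_det, fderiv_comp p hg hf, ContinuousLinearMap.toLinearMap_comp, LinearMap.det_comp,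
    jacDet_eq_det, jacDet_eq_det]

theorem contDiff_jacDet (hf : ContDiff ℝ ∞ f) : ContDiff ℝ ∞ (jacDet f) :=
  contDiff_entryDet.comp (hf.fderiv_right le_rfl)

theorem JetEq.jacDet {k : ℕ} (hfg : JetEq ℝ (k + 1) f g p) (hf : ContDiff ℝ ∞ f)
    (hg : ContDiff ℝ ∞ g) : JetEq ℝ k (jacDet f) (jacDet g) p := by
  have hk : (k : ℕ∞ω) + 1 ≤ ∞ := by exact_mod_cast le_top
  have hdet := contDiff_entryDet.of_le (le_self_add.trans hk)
  exact hfg.fderiv.comp_left hdet.contDiffAt (hf.fderiv_right hk).contDiffAt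
    (hg.fderiv_right hk).contDiffAt

theorem CorankOne.jacDet_eq_zero (hf : CorankOne f) : jacDet f 0 = 0 := by
  by_contra h
  have hrange := LinearMap.range_eq_top.2 (jacDet_ne_zero_iff.1 h).surjective
  have hrank : LinearMap.rank (fderiv ℝ f 0).toLinearMap = 2 := by
    rw [LinearMap.rank, hrange, rank_top, rank_prod', Module.rank_self]
    norm_num
  rw [CorankOne, hrank] at hf
  norm_num at hf

theorem CorankOne.fderiv_ne_zero (hf : CorankOne f) : fderiv ℝ f 0 ≠ 0 := by
  intro h
  rw [CorankOne, h] at hf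
  simp at hf

theorem IsNullVF.fderiv_apply_zero {η : ℝ × ℝ → ℝ × ℝ} (hη : IsNullVF f η)
    (hf : CorankOne f) : fderiv ℝ f 0 (η 0) = 0 := by
  obtain ⟨-, U, hU, -, hnull⟩ := hη
  exact hnull 0 (mem_of_mem_nhds hU) hf.jacDet_eq_zero

theorem IsNullVF.differentiableAt {η : ℝ × ℝ → ℝ × ℝ} (hη : IsNullVF f η) :
    DifferentiableAt ℝ η 0 := by
  obtain ⟨-, U, hU, hsmooth, -⟩ := hη
  exact (hsmooth.contDiffAt hU).differentiableAt (by simp)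

end Jacobian

section Germs

variable {f φ ψ : ℝ × ℝ → ℝ × ℝ} {r : ℕ}

/-- A smooth map of the plane that restricts to a coordinate change near the origin; the source and
target changes in `JetEquiv` are of this kind. -/
structure IsDiffeoGerm (φ : ℝ × ℝ → ℝ × ℝ) : Prop where
  contDiff : ContDiff ℝ ∞ φ
  map_zero : φ 0 = 0
  bijective_fderiv : Function.Bijective (fderiv ℝ φ 0)

theorem isDiffeoGerm_of_continuousLinearEquiv (L : (ℝ × ℝ) ≃L[ℝ] ℝ × ℝ) : IsDiffeoGerm L where
  contDiff := L.contDiff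
  map_zero := L.map_zero
  bijective_fderiv := by rw [L.fderiv]; exact L.bijective

theorem isDiffeoGerm_id : IsDiffeoGerm id :=
  isDiffeoGerm_of_continuousLinearEquiv (.refl ℝ (ℝ × ℝ))

theorem IsDiffeoGerm.differentiable (hφ : IsDiffeoGerm φ) : Differentiable ℝ φ :=
  hφ.contDiff.differentiable (by simp)

theorem IsDiffeoGerm.jacDet_ne_zero (hφ : IsDiffeoGerm φ) : jacDet φ 0 ≠ 0 :=
  jacDet_ne_zero_iff.2 hφ.bijective_fderiv

theorem IsDiffeoGerm.comp (hψ : IsDiffeoGerm ψ) (hφ : IsDiffeoGerm φ) : IsDiffeoGerm (ψ ∘ φ) where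
  contDiff := hψ.contDiff.comp hφ.contDiff
  map_zero := by rw [Function.comp_apply, hφ.map_zero, hψ.map_zero]
  bijective_fderiv := by
    rw [fderiv_comp 0 (hψ.differentiable _) (hφ.differentiable 0), hφ.map_zero]
    exact hψ.bijective_fderiv.comp hφ.bijective_fderiv

theorem jetEquiv_iff {g : ℝ × ℝ → ℝ × ℝ} :
    JetEquiv r f g ↔ ∃ φ ψ, IsDiffeoGerm φ ∧ IsDiffeoGerm ψ ∧ JetEq ℝ r (ψ ∘ f ∘ φ) g 0 :=
  ⟨fun ⟨φ, ψ, hφ, hψ, hφ0, hψ0, hφ', hψ', h⟩ ↦ ⟨φ, ψ, ⟨hφ, hφ0, hφ'⟩, ⟨hψ, hψ0, hψ'⟩, h⟩,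
    fun ⟨φ, ψ, hφ, hψ, h⟩ ↦ ⟨φ, ψ, hφ.contDiff, hψ.contDiff, hφ.map_zero, hψ.map_zero,
      hφ.bijective_fderiv, hψ.bijective_fderiv, h⟩⟩

theorem JetEquiv.of_comp_comp {g : ℝ × ℝ → ℝ × ℝ} (h : JetEquiv r (ψ ∘ f ∘ φ) g)
    (hφ : IsDiffeoGerm φ) (hψ : IsDiffeoGerm ψ) : JetEquiv r f g := by
  obtain ⟨φ', ψ', hφ', hψ', hjet⟩ := jetEquiv_iff.1 h
  exact jetEquiv_iff.2 ⟨φ ∘ φ', ψ' ∘ ψ, hφ.comp hφ', hψ'.comp hψ, hjet⟩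

end Germs

section Reconstruction

variable {g h : ℝ × ℝ → ℝ} {x : ℝ × ℝ} {k : ℕ}

theorem contDiff_dop (hg : ContDiff ℝ ∞ g) (v : ℝ × ℝ) : ContDiff ℝ ∞ (dop v g) :=
  (hg.fderiv_right le_rfl).clm_apply contDiff_const

theorem dop_dop {p : ℝ × ℝ} (hg : DifferentiableAt ℝ (fderiv ℝ g) p) (v w : ℝ × ℝ) :
    dop v (dop w g) p = fderiv ℝ (fderiv ℝ g) p v w := by
  change fderiv ℝ (fun q ↦ fderiv ℝ g q w) p v = _
  rw [fderiv_clm_apply hg (differentiableAt_const w)]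
  simp

theorem dop_comm (hg : ContDiff ℝ ∞ g) (v w : ℝ × ℝ) : dop v (dop w g) = dop w (dop v g) := by
  ext p
  have hg' : DifferentiableAt ℝ (fderiv ℝ g) p :=
    (hg.fderiv_right (m := ∞) le_rfl).differentiable (by simp) p
  rw [dop_dop hg', dop_dop hg']
  exact ((contDiff_infty.1 hg 2).contDiffAt.isSymmSndFDerivAt (by simp)).eq v w

theorem JetEq.dop (hgh : JetEq ℝ (k + 1) g h x) (hg : ContDiff ℝ ∞ g) (hh : ContDiff ℝ ∞ h)
    (v : ℝ × ℝ) : JetEq ℝ k (dop v g) (dop v h) x := by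
  have hk : (k : ℕ∞ω) + 1 ≤ ∞ := by exact_mod_cast le_top
  exact hgh.fderiv.comp_left (ContinuousLinearMap.apply ℝ ℝ v).contDiff.contDiffAt
    (hg.fderiv_right hk).contDiffAt (hh.fderiv_right hk).contDiffAt

theorem fderiv_eq_coprod_comp (g : ℝ × ℝ → ℝ) :
    fderiv ℝ g = (fun c : ℝ × ℝ ↦ c.1 • ContinuousLinearMap.fst ℝ ℝ ℝ +
      c.2 • ContinuousLinearMap.snd ℝ ℝ ℝ) ∘ fun p ↦ (pdx g p, pdy g p) := by
  ext p <;> simp [pdx, pdy, _root_.dop]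

theorem jetEq_succ_of_partial (hg : ContDiff ℝ ∞ g) (hh : ContDiff ℝ ∞ h) (h₀ : g x = h x)
    (hx : JetEq ℝ k (pdx g) (pdx h) x) (hy : JetEq ℝ k (pdy g) (pdy h) x) :
    JetEq ℝ (k + 1) g h x := by
  have smooth {u : ℝ × ℝ → ℝ} (hu : ContDiff ℝ ∞ u) (v : ℝ × ℝ) : ContDiffAt ℝ k (dop v u) x :=
    ((contDiff_dop hu v).of_le (by exact_mod_cast le_top)).contDiffAt
  rw [jetEq_succ_iff, fderiv_eq_coprod_comp g, fderiv_eq_coprod_comp h]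
  refine ⟨h₀, (hx.prodMk hy (smooth hg _) (smooth hh _) (smooth hg _) (smooth hh _)).comp_left
    ?_ ((smooth hg _).prodMk (smooth hg _)) ((smooth hh _).prodMk (smooth hh _))⟩
  fun_prop

theorem pdx_apply_axis_congr (hg : Differentiable ℝ g) (hh : Differentiable ℝ h)
    (haxis : ∀ᶠ t in 𝓝 (0 : ℝ), g (t, 0) = h (t, 0)) :
    ∀ᶠ t in 𝓝 (0 : ℝ), pdx g (t, 0) = pdx h (t, 0) := by
  have hpdx {u : ℝ × ℝ → ℝ} (hu : Differentiable ℝ u) (t : ℝ) :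
      HasDerivAt (fun s ↦ u (s, 0)) (pdx u (t, 0)) t :=
    (hu (t, 0)).hasFDerivAt.comp_hasDerivAt t ((hasDerivAt_id t).prodMk (hasDerivAt_const t 0))
  filter_upwards [haxis.eventually_nhds] with t ht
  exact (hpdx hg t).unique ((hpdx hh t).congr_of_eventuallyEq ht)

theorem jetEq_succ_of_pdy {g h : ℝ × ℝ → ℝ} {k : ℕ} (hg : ContDiff ℝ ∞ g)
    (hh : ContDiff ℝ ∞ h)
    (haxis : ∀ᶠ t in 𝓝 (0 : ℝ), g (t, 0) = h (t, 0)) (hy : JetEq ℝ k (pdy g) (pdy h) 0) :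
    JetEq ℝ (k + 1) g h 0 := by
  have haxis' := pdx_apply_axis_congr (hg.differentiable (by simp)) (hh.differentiable (by simp))
    haxis
  refine jetEq_succ_of_partial hg hh haxis.self_of_nhds ?_ hy
  match k with
  | 0 => exact jetEq_zero_iff.2 haxis'.self_of_nhds
  | k + 1 =>
    have hyx : JetEq ℝ k (pdy (pdx g)) (pdy (pdx h)) 0 := by
      simpa only [pdy, pdx, dop_comm hg (0, 1), dop_comm hh (0, 1)] using
        hy.dop (contDiff_dop hg _) (contDiff_dop hh _) (1, 0)
    exact jetEq_succ_of_pdy (contDiff_dop hg _) (contDiff_dop hh _) haxis' hyx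

theorem jacDet_eventuallyEq_pdy {F : ℝ × ℝ → ℝ × ℝ} (hF : ContDiff ℝ ∞ F)
    (hF₁ : ∀ᶠ p in 𝓝 (0 : ℝ × ℝ), (F p).1 = p.1) :
    jacDet F =ᶠ[𝓝 0] pdy fun p ↦ (F p).2 := by
  filter_upwards [hF₁.eventually_nhds] with p hp
  have hFp : DifferentiableAt ℝ F p := hF.differentiable (by simp) p
  have hfst (v : ℝ × ℝ) : (fderiv ℝ F p v).1 = v.1 :=
    congr($((hFp.hasFDerivAt.fst.congr_of_eventuallyEq (f₁ := Prod.fst)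
      (hp.mono fun _ h ↦ h.symm)).unique hasFDerivAt_fst) v)
  have hsnd (v : ℝ × ℝ) : fderiv ℝ (fun q ↦ (F q).2) p v = (fderiv ℝ F p v).2 :=
    congr($(hFp.hasFDerivAt.snd.fderiv) v)
  simp only [jacDet, pdy, _root_.dop, hfst, hsnd]
  ring

theorem jetEq_succ_of_jacDet {F G : ℝ × ℝ → ℝ × ℝ} (hF : ContDiff ℝ ∞ F) (hG : ContDiff ℝ ∞ G)
    (hF₁ : ∀ᶠ p in 𝓝 (0 : ℝ × ℝ), (F p).1 = p.1) (hG₁ : ∀ᶠ p in 𝓝 (0 : ℝ × ℝ), (G p).1 = p.1)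
    (haxis : ∀ᶠ t in 𝓝 (0 : ℝ), (F (t, 0)).2 = (G (t, 0)).2)
    (hjac : JetEq ℝ k (jacDet F) (jacDet G) 0) : JetEq ℝ (k + 1) F G 0 := by
  have hfst : JetEq ℝ (k + 1) (fun p ↦ (F p).1) (fun p ↦ (G p).1) 0 :=
    jetEq_of_eventuallyEq (by filter_upwards [hF₁, hG₁] with p hFp hGp using hFp.trans hGp.symm)
  have hpdy := (jetEq_of_eventuallyEq (jacDet_eventuallyEq_pdy hF hF₁)).symm.trans
    (hjac.trans (jetEq_of_eventuallyEq (jacDet_eventuallyEq_pdy hG hG₁)))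
  have smooth {u : ℝ × ℝ → ℝ} (hu : ContDiff ℝ ∞ u) : ContDiffAt ℝ (k + 1 : ℕ) u 0 :=
    (hu.of_le (by exact_mod_cast le_top)).contDiffAt
  exact hfst.prodMk (jetEq_succ_of_pdy hF.snd hG.snd haxis hpdy) (smooth hF.fst) (smooth hG.fst)
    (smooth hF.snd) (smooth hG.snd)

end Reconstruction

section CriticalPoints

variable {𝕜 E F G : Type*} [NontriviallyNormedField 𝕜] [NormedAddCommGroup E] [NormedSpace 𝕜 E]
  [NormedAddCommGroup F] [NormedSpace 𝕜 F] [NormedAddCommGroup G] [NormedSpace 𝕜 G] {x : E}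

theorem differentiableAt_fderiv_of_contDiffAt_two {f : E → F} (hf : ContDiffAt 𝕜 2 f x) :
    DifferentiableAt 𝕜 (fderiv 𝕜 f) x :=
  (hf.fderiv_right (m := 1) (by norm_num)).differentiableAt one_ne_zero

theorem eventually_differentiableAt_of_contDiffAt_two {f : E → F} (hf : ContDiffAt 𝕜 2 f x) :
    ∀ᶠ p in 𝓝 x, DifferentiableAt 𝕜 f p :=
  (hf.eventually (by simp)).mono fun _ h ↦ h.differentiableAt two_ne_zero

theorem fderiv_smul_of_apply_eq_zero {u : E → 𝕜} {f : E → F} (hu : DifferentiableAt 𝕜 u x)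
    (hf : DifferentiableAt 𝕜 f x) (hfx : f x = 0) :
    fderiv 𝕜 (u • f) x = u x • fderiv 𝕜 f x := by
  rw [fderiv_smul hu hf, hfx, ContinuousLinearMap.smulRight_zero, add_zero]

theorem fderiv_fderiv_smul_of_critical {u : E → 𝕜} {f : E → F} (hu : ContDiffAt 𝕜 2 u x)
    (hf : ContDiffAt 𝕜 2 f x) (hfx : f x = 0) (hf' : fderiv 𝕜 f x = 0) :
    fderiv 𝕜 (fderiv 𝕜 (u • f)) x = u x • fderiv 𝕜 (fderiv 𝕜 f) x := by
  have hev : fderiv 𝕜 (u • f) =ᶠ[𝓝 x]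
      fun p ↦ u p • fderiv 𝕜 f p + (fderiv 𝕜 u p).smulRight (f p) := by
    filter_upwards [eventually_differentiableAt_of_contDiffAt_two hu,
      eventually_differentiableAt_of_contDiffAt_two hf] with p hup hfp using fderiv_smul hup hfp
  have hud := hu.differentiableAt two_ne_zero
  have hfd := hf.differentiableAt two_ne_zero
  have h₁ := hud.hasFDerivAt.smul (differentiableAt_fderiv_of_contDiffAt_two hf).hasFDerivAt
  have h₂ := (ContinuousLinearMap.smulRightL 𝕜 E F).hasFDerivAt_of_bilinear
    (differentiableAt_fderiv_of_contDiffAt_two hu).hasFDerivAt hfd.hasFDerivAt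
  refine (hev.fderiv_eq.trans (h₁.add h₂).fderiv).trans ?_
  ext
  simp [hfx, hf']

theorem fderiv_fderiv_comp_of_critical {f : F → G} {φ : E → F} (hf : ContDiffAt 𝕜 2 f (φ x))
    (hφ : ContDiffAt 𝕜 2 φ x) (hf' : fderiv 𝕜 f (φ x) = 0) (v w : E) :
    fderiv 𝕜 (fderiv 𝕜 (f ∘ φ)) x v w =
      fderiv 𝕜 (fderiv 𝕜 f) (φ x) (fderiv 𝕜 φ x v) (fderiv 𝕜 φ x w) := by
  have hev : fderiv 𝕜 (f ∘ φ) =ᶠ[𝓝 x] fun p ↦ (fderiv 𝕜 f (φ p)).comp (fderiv 𝕜 φ p) := by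
    filter_upwards [hφ.continuousAt.eventually (eventually_differentiableAt_of_contDiffAt_two hf),
      eventually_differentiableAt_of_contDiffAt_two hφ] with p hfp hφp using fderiv_comp p hfp hφp
  have hφd := (hφ.differentiableAt two_ne_zero).hasFDerivAt
  have h₁ := (differentiableAt_fderiv_of_contDiffAt_two hf).hasFDerivAt.comp x hφd
  have h₂ := h₁.clm_comp (differentiableAt_fderiv_of_contDiffAt_two hφ).hasFDerivAt
  rw [hev.fderiv_eq.trans h₂.fderiv]
  simp [hf']

end CriticalPoints

section CoordinateChange

variable {f φ ψ : ℝ × ℝ → ℝ × ℝ}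

theorem fderiv_comp_comp_zero (hf : ContDiff ℝ ∞ f) (hf0 : f 0 = 0) (hφ : IsDiffeoGerm φ)
    (hψ : IsDiffeoGerm ψ) (v : ℝ × ℝ) :
    fderiv ℝ (ψ ∘ f ∘ φ) 0 v = fderiv ℝ ψ 0 (fderiv ℝ f 0 (fderiv ℝ φ 0 v)) := by
  have hf' : Differentiable ℝ f := hf.differentiable (by simp)
  rw [fderiv_comp 0 (hψ.differentiable _) ((hf'.comp hφ.differentiable) 0),
    fderiv_comp 0 (hf' _) (hφ.differentiable 0)]
  simp only [ContinuousLinearMap.comp_apply, Function.comp_apply, hφ.map_zero, hf0]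

theorem jacDet_comp_comp (hf : ContDiff ℝ ∞ f) (hφ : ContDiff ℝ ∞ φ) (hψ : ContDiff ℝ ∞ ψ) :
    jacDet (ψ ∘ f ∘ φ) = ((jacDet ψ ∘ f ∘ φ) * jacDet φ) • (jacDet f ∘ φ) := by
  have diff {g : ℝ × ℝ → ℝ × ℝ} (hg : ContDiff ℝ ∞ g) : Differentiable ℝ g :=
    hg.differentiable (by simp)
  ext p
  rw [jacDet_comp (diff hψ _) (diff (hf.comp hφ) p), jacDet_comp (diff hf _) (diff hφ p)]
  simp only [Pi.smul_apply', Pi.mul_apply, Function.comp_apply, smul_eq_mul]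
  ring

theorem contDiff_jacDet_comp_mul_jacDet (hf : ContDiff ℝ ∞ f) (hφ : ContDiff ℝ ∞ φ)
    (hψ : ContDiff ℝ ∞ ψ) : ContDiff ℝ ∞ ((jacDet ψ ∘ f ∘ φ) * jacDet φ) :=
  ((contDiff_jacDet hψ).comp (hf.comp hφ)).mul (contDiff_jacDet hφ)

theorem fderiv_jacDet_comp_comp (hf : ContDiff ℝ ∞ f) (hf0 : f 0 = 0) (hφ : IsDiffeoGerm φ)
    (hψ : IsDiffeoGerm ψ) (hjac : jacDet f 0 = 0) :
    fderiv ℝ (jacDet (ψ ∘ f ∘ φ)) 0 =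
      (jacDet ψ 0 * jacDet φ 0) • (fderiv ℝ (jacDet f) 0).comp (fderiv ℝ φ 0) := by
  have hf' : Differentiable ℝ (jacDet f) := (contDiff_jacDet hf).differentiable (by simp)
  have hunit := contDiff_jacDet_comp_mul_jacDet hf hφ.contDiff hψ.contDiff
  rw [jacDet_comp_comp hf hφ.contDiff hψ.contDiff,
    fderiv_smul_of_apply_eq_zero (hunit.differentiable (by simp) 0)
      ((hf'.comp hφ.differentiable) 0) (by rw [Function.comp_apply, hφ.map_zero, hjac]),
    fderiv_comp 0 (hf' _) (hφ.differentiable 0)]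
  simp only [Pi.mul_apply, Function.comp_apply, hφ.map_zero, hf0]

theorem fderiv_fderiv_jacDet_comp_comp (hf : ContDiff ℝ ∞ f) (hf0 : f 0 = 0)
    (hφ : IsDiffeoGerm φ) (hψ : IsDiffeoGerm ψ) (hjac : jacDet f 0 = 0)
    (hjac' : fderiv ℝ (jacDet f) 0 = 0) (v w : ℝ × ℝ) :
    fderiv ℝ (fderiv ℝ (jacDet (ψ ∘ f ∘ φ))) 0 v w =
      jacDet ψ 0 * jacDet φ 0 *
        fderiv ℝ (fderiv ℝ (jacDet f)) 0 (fderiv ℝ φ 0 v) (fderiv ℝ φ 0 w) := by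
  have two {X Y : Type} [NormedAddCommGroup X] [NormedSpace ℝ X] [NormedAddCommGroup Y]
      [NormedSpace ℝ Y] {g : X → Y} (hg : ContDiff ℝ ∞ g) (x : X) : ContDiffAt ℝ 2 g x :=
    ContDiff.contDiffAt (mod_cast contDiff_infty.1 hg 2)
  have hf' := contDiff_jacDet hf
  have hcomp : fderiv ℝ (jacDet f ∘ φ) 0 = 0 := by
    rw [fderiv_comp 0 (hf'.differentiable (by simp) _) (hφ.differentiable 0),
      hφ.map_zero, hjac', ContinuousLinearMap.zero_comp]
  have hunit := contDiff_jacDet_comp_mul_jacDet hf hφ.contDiff hψ.contDiff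
  rw [jacDet_comp_comp hf hφ.contDiff hψ.contDiff,
    fderiv_fderiv_smul_of_critical (two hunit 0) (two (hf'.comp hφ.contDiff) 0)
      (by rw [Function.comp_apply, hφ.map_zero, hjac]) hcomp,
    smul_apply, smul_apply,
    fderiv_fderiv_comp_of_critical (two hf' _) (two hφ.contDiff 0) (by rw [hφ.map_zero, hjac'])]
  simp only [Pi.mul_apply, Function.comp_apply, hφ.map_zero, hf0, smul_eq_mul]

end CoordinateChange

section Criterion

variable {g : ℝ × ℝ → ℝ} {e : ℝ × ℝ}

/-- The origin is a critical point of `g` whose Hessian is degenerate but does not vanish on `e`.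
For `g` the Jacobian determinant and `e` the value of a null vector field this is the
vector-field-free form of the recognition criterion. -/
structure IsDegenerateCriticalAlong (g : ℝ × ℝ → ℝ) (e : ℝ × ℝ) : Prop where
  fderiv_eq_zero : fderiv ℝ g 0 = 0
  exists_kernel : ∃ k ≠ 0, fderiv ℝ (fderiv ℝ g) 0 k = 0
  apply_ne_zero : fderiv ℝ (fderiv ℝ g) 0 e e ≠ 0

theorem etaIter_two {η : ℝ × ℝ → ℝ × ℝ} (hg : DifferentiableAt ℝ (fderiv ℝ g) 0)
    (hη : DifferentiableAt ℝ η 0) (hg' : fderiv ℝ g 0 = 0) :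
    etaIter η 2 g 0 = fderiv ℝ (fderiv ℝ g) 0 (η 0) (η 0) := by
  change fderiv ℝ (fun p ↦ fderiv ℝ g p (η p)) 0 (η 0) = _
  rw [fderiv_clm_apply hg hη]
  simp [hg']

theorem vecMul_hess (hg : DifferentiableAt ℝ (fderiv ℝ g) 0) (v : Fin 2 → ℝ) :
    Matrix.vecMul v (hess g) = ![fderiv ℝ (fderiv ℝ g) 0 (v 0, v 1) (1, 0),
      fderiv ℝ (fderiv ℝ g) 0 (v 0, v 1) (0, 1)] := by
  have hv : (v 0, v 1) = v 0 • ((1, 0) : ℝ × ℝ) + v 1 • ((0, 1) : ℝ × ℝ) := by simp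
  rw [hv, map_add, map_smul, map_smul]
  ext j
  fin_cases j <;> simp [Matrix.vecMul, dotProduct, hess, pdx, pdy, dop_dop hg]

theorem exists_fderiv_fderiv_eq_zero_iff (hg : DifferentiableAt ℝ (fderiv ℝ g) 0) :
    (∃ k ≠ 0, fderiv ℝ (fderiv ℝ g) 0 k = 0) ↔ (hess g).det = 0 := by
  rw [← Matrix.exists_vecMul_eq_zero_iff]
  constructor
  · rintro ⟨k, hk, hker⟩
    refine ⟨![k.1, k.2], fun h ↦ hk ?_, ?_⟩
    · exact Prod.ext (congrFun h 0) (congrFun h 1)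
    · rw [vecMul_hess hg]
      simp [hker]
  · rintro ⟨v, hv, hker⟩
    rw [vecMul_hess hg] at hker
    refine ⟨(v 0, v 1), fun h ↦ hv ?_, ?_⟩
    · ext j
      fin_cases j
      exacts [congrArg Prod.fst h, congrArg Prod.snd h]
    · ext
      exacts [congrFun hker 0, congrFun hker 1]

theorem rank_eq_one_iff_det_eq_zero {K : Type*} [Field K] {M : Matrix (Fin 2) (Fin 2) K}
    (hM : M ≠ 0) : M.rank = 1 ↔ M.det = 0 := by
  refine ⟨fun hrank ↦ ?_, fun hdet ↦ ?_⟩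
  · by_contra hdet
    have h := Matrix.rank_of_det_ne_zero hdet
    rw [hrank, Fintype.card_fin] at h
    norm_num at h
  · obtain ⟨v, hv, hMv⟩ := Matrix.exists_mulVec_eq_zero_iff.2 hdet
    have hker : Module.finrank K M.mulVecLin.ker ≠ 0 := by
      rw [Ne, Submodule.finrank_eq_zero, Submodule.eq_bot_iff]
      exact fun h ↦ hv (h v hMv)
    have hrange : Module.finrank K M.mulVecLin.range ≠ 0 := by
      rw [Ne, Submodule.finrank_eq_zero, LinearMap.range_eq_bot]
      exact fun h ↦ hM (Matrix.toLin'.map_eq_zero_iff.1 h)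
    have hsum := M.mulVecLin.finrank_range_add_finrank_ker
    rw [Module.finrank_fin_fun] at hsum
    rw [Matrix.rank]
    lia

theorem hess_ne_zero (hg : DifferentiableAt ℝ (fderiv ℝ g) 0)
    (he : fderiv ℝ (fderiv ℝ g) 0 e e ≠ 0) : hess g ≠ 0 := by
  intro h
  have hzero (v : Fin 2 → ℝ) : fderiv ℝ (fderiv ℝ g) 0 (v 0, v 1) = 0 := by
    have hv := vecMul_hess hg v
    rw [h, Matrix.vecMul_zero] at hv
    ext
    exacts [(congrFun hv 0).symm, (congrFun hv 1).symm]
  exact he (by simpa using congr($(hzero ![e.1, e.2]) e))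

theorem isDegenerateCriticalAlong_iff {η : ℝ × ℝ → ℝ × ℝ}
    (hg : DifferentiableAt ℝ (fderiv ℝ g) 0) (hη : DifferentiableAt ℝ η 0) :
    IsDegenerateCriticalAlong g (η 0) ↔
      fderiv ℝ g 0 = 0 ∧ (hess g).rank = 1 ∧ etaIter η 2 g 0 ≠ 0 := by
  have key (h : fderiv ℝ (fderiv ℝ g) 0 (η 0) (η 0) ≠ 0) :
      (∃ k ≠ 0, fderiv ℝ (fderiv ℝ g) 0 k = 0) ↔ (hess g).rank = 1 :=
    (exists_fderiv_fderiv_eq_zero_iff hg).trans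
      (rank_eq_one_iff_det_eq_zero (hess_ne_zero hg h)).symm
  constructor
  · rintro ⟨hcrit, hker, hne⟩
    exact ⟨hcrit, (key hne).1 hker, by rwa [etaIter_two hg hη hcrit]⟩
  · rintro ⟨hcrit, hrank, hne⟩
    rw [etaIter_two hg hη hcrit] at hne
    exact ⟨hcrit, (key hne).2 hrank, hne⟩

end Criterion

section RightInverse

variable {E F : Type*} [NormedAddCommGroup E] [NormedSpace ℝ E] [NormedAddCommGroup F]
  [NormedSpace ℝ F]

-- The coordinate changes in `JetEquiv` are globally smooth, so local inverses are cut off by a bump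
-- function.
theorem exists_contDiff_eventuallyEq [HasContDiffBump E] {f : E → F} {x : E} {n : ℕ∞}
    (hf : ∀ᶠ y in 𝓝 x, ContDiffAt ℝ n f y) : ∃ g, ContDiff ℝ n g ∧ g =ᶠ[𝓝 x] f := by
  obtain ⟨ε, hε, hball⟩ := Metric.eventually_nhds_iff_ball.1 hf
  let χ : ContDiffBump x := ⟨ε / 3, ε / 2, by positivity, by linarith⟩
  refine ⟨fun y ↦ χ y • f y, contDiff_iff_contDiffAt.2 fun y ↦ ?_, ?_⟩
  · by_cases hy : y ∈ Metric.ball x ε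
    · exact χ.contDiff.contDiffAt.smul (hball y hy)
    · have hsupp : y ∉ tsupport χ := fun h ↦ hy <| by
        rw [χ.tsupport_eq] at h
        exact Metric.closedBall_subset_ball (half_lt_self hε) h
      refine (contDiffAt_const (c := (0 : F))).congr_of_eventuallyEq ?_
      filter_upwards [notMem_tsupport_iff_eventuallyEq.1 hsupp] with z hz
      rw [hz, Pi.zero_apply, zero_smul]
  · filter_upwards [χ.eventuallyEq_one] with y hy
    rw [hy, Pi.one_apply, one_smul]

theorem eventually_hasFDerivAt_equiv [CompleteSpace E] {Θ : E → F} {Θ' : E ≃L[ℝ] F} {a : E}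
    {n : ℕ∞ω} (hn : n ≠ 0) (hΘ : ContDiff ℝ n Θ) (hΘ' : HasFDerivAt Θ (Θ' : E →L[ℝ] F) a) :
    ∀ᶠ x in 𝓝 a, ∃ L : E ≃L[ℝ] F, HasFDerivAt Θ (L : E →L[ℝ] F) x := by
  have hequiv := Θ'.nhds
  rw [← hΘ'.fderiv] at hequiv
  filter_upwards [(hΘ.continuous_fderiv hn).continuousAt hequiv] with x ⟨L, hL⟩
  exact ⟨L, hL ▸ (hΘ.differentiable hn x).hasFDerivAt⟩

theorem exists_contDiff_rightInverse [CompleteSpace E] [HasContDiffBump F] {Θ : E → F}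
    {Θ' : E ≃L[ℝ] F} {a : E} {n : ℕ∞} (hn : n ≠ 0) (hΘ : ContDiff ℝ n Θ)
    (hΘ' : HasFDerivAt Θ (Θ' : E →L[ℝ] F) a) :
    ∃ χ : F → E, ContDiff ℝ n χ ∧ χ (Θ a) = a ∧
      HasFDerivAt χ (Θ'.symm : F →L[ℝ] E) (Θ a) ∧ ∀ᶠ y in 𝓝 (Θ a), Θ (χ y) = y := by
  have hn' : (n : ℕ∞ω) ≠ 0 := by exact_mod_cast hn
  let Φ := hΘ.contDiffAt.toOpenPartialHomeomorph Θ hΘ' hn'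
  have ha : a ∈ Φ.source := hΘ.contDiffAt.mem_toOpenPartialHomeomorph_source hΘ' hn'
  have haΦ : Θ a ∈ Φ.target := Φ.map_source ha
  have hΦa : Φ.symm (Θ a) = a := Φ.left_inv ha
  have hsymm : ∀ᶠ y in 𝓝 (Θ a), ContDiffAt ℝ n Φ.symm y := by
    have htendsto : Tendsto Φ.symm (𝓝 (Θ a)) (𝓝 a) := by
      simpa only [hΦa] using (Φ.continuousAt_symm haΦ).tendsto
    filter_upwards [htendsto.eventually (eventually_hasFDerivAt_equiv hn' hΘ hΘ'),
      Φ.open_target.mem_nhds haΦ] with y ⟨L, hL⟩ hy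
    exact Φ.contDiffAt_symm hy hL hΘ.contDiffAt
  obtain ⟨χ, hχ, hχΦ⟩ := exists_contDiff_eventuallyEq hsymm
  refine ⟨χ, hχ, hχΦ.eq_of_nhds.trans hΦa, ?_, ?_⟩
  · refine HasFDerivAt.congr_of_eventuallyEq ?_ hχΦ
    exact Φ.hasFDerivAt_symm haΦ (by rwa [hΦa])
  · filter_upwards [hχΦ, Φ.open_target.mem_nhds haΦ] with y hy hyt
    rw [hy]
    exact Φ.right_inv hyt

end RightInverse

section Recognition

variable {f F φ ψ : ℝ × ℝ → ℝ × ℝ} {c d : ℝ} {e : ℝ × ℝ}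

theorem IsDegenerateCriticalAlong.of_comp_comp (hf : ContDiff ℝ ∞ f) (hf0 : f 0 = 0)
    (hφ : IsDiffeoGerm φ) (hψ : IsDiffeoGerm ψ) (hjac : jacDet f 0 = 0)
    (h : IsDegenerateCriticalAlong (jacDet (ψ ∘ f ∘ φ)) e) :
    IsDegenerateCriticalAlong (jacDet f) (fderiv ℝ φ 0 e) := by
  obtain ⟨hcrit, ⟨k, hk, hker⟩, hne⟩ := h
  have hunit := mul_ne_zero hψ.jacDet_ne_zero hφ.jacDet_ne_zero
  have hcrit' : fderiv ℝ (jacDet f) 0 = 0 := by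
    rw [fderiv_jacDet_comp_comp hf hf0 hφ hψ hjac, smul_eq_zero_iff_right hunit] at hcrit
    refine ContinuousLinearMap.ext fun v ↦ ?_
    obtain ⟨u, rfl⟩ := hφ.bijective_fderiv.surjective v
    exact congr($hcrit u)
  have hsecond := fderiv_fderiv_jacDet_comp_comp hf hf0 hφ hψ hjac hcrit'
  refine ⟨hcrit', ⟨fderiv ℝ φ 0 k, ?_, ?_⟩, fun h ↦ hne (by rw [hsecond, h, mul_zero])⟩
  · exact (map_ne_zero_iff _ hφ.bijective_fderiv.injective).2 hk
  · refine ContinuousLinearMap.ext fun v ↦ ?_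
    obtain ⟨u, rfl⟩ := hφ.bijective_fderiv.surjective v
    have hku := hsecond k u
    rw [hker, zero_apply] at hku
    exact (mul_eq_zero.1 hku.symm).resolve_left hunit

/-- `f` looks like `(x, c y³ / 6)` at the origin to the extent seen by its derivative and by the
`2`-jet of its Jacobian determinant. Linear coordinate changes bring `f` into this form. -/
structure IsAdapted (f : ℝ × ℝ → ℝ × ℝ) (c : ℝ) : Prop where
  contDiff : ContDiff ℝ ∞ f
  map_zero : f 0 = 0
  fderiv_apply : ∀ v, fderiv ℝ f 0 v = (v.1, 0)
  fderiv_jacDet : fderiv ℝ (jacDet f) 0 = 0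
  fderiv_fderiv_jacDet_apply : ∀ v w, fderiv ℝ (fderiv ℝ (jacDet f)) 0 v w = c * (v.2 * w.2)

theorem IsAdapted.jacDet_eq_zero (hf : IsAdapted f c) : jacDet f 0 = 0 := by
  simp [jacDet, hf.fderiv_apply]

theorem IsAdapted.isDegenerateCriticalAlong (hf : IsAdapted f c) (hc : c ≠ 0) (he : e.2 ≠ 0) :
    IsDegenerateCriticalAlong (jacDet f) e where
  fderiv_eq_zero := hf.fderiv_jacDet
  exists_kernel := ⟨(1, 0), by simp, ContinuousLinearMap.ext fun v ↦ by
    simp [hf.fderiv_fderiv_jacDet_apply]⟩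
  apply_ne_zero := by
    rw [hf.fderiv_fderiv_jacDet_apply]
    exact mul_ne_zero hc (mul_ne_zero he he)

theorem IsAdapted.of_jetEq (hf : IsAdapted f c) (hF : ContDiff ℝ ∞ F) (hjet : JetEq ℝ 3 F f 0) :
    IsAdapted F c := by
  have hjac := hjet.jacDet hF hf.contDiff
  exact ⟨hF, hjet.eq.trans hf.map_zero, hjet.fderiv.eq ▸ hf.fderiv_apply,
    hjac.fderiv.eq.trans hf.fderiv_jacDet, hjac.fderiv.fderiv.eq ▸ hf.fderiv_fderiv_jacDet_apply⟩

theorem IsAdapted.jetEq_jacDet (hf : IsAdapted f c) (hF : IsAdapted F c) :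
    JetEq ℝ 2 (jacDet f) (jacDet F) 0 := by
  simp only [jetEq_succ_iff, jetEq_zero_iff]
  refine ⟨hf.jacDet_eq_zero.trans hF.jacDet_eq_zero.symm,
    hf.fderiv_jacDet.trans hF.fderiv_jacDet.symm,
    ContinuousLinearMap.ext fun v ↦ ContinuousLinearMap.ext fun w ↦ ?_⟩
  rw [hf.fderiv_fderiv_jacDet_apply, hF.fderiv_fderiv_jacDet_apply]

theorem IsAdapted.comp_comp (hf : IsAdapted f c) (hφ : IsDiffeoGerm φ) (hψ : IsDiffeoGerm ψ)
    (hφ' : ∀ v, fderiv ℝ φ 0 v = v) (hψ' : ∀ v, fderiv ℝ ψ 0 v = (v.1, d * v.2)) :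
    IsAdapted (ψ ∘ f ∘ φ) (d * c) where
  contDiff := hψ.contDiff.comp (hf.contDiff.comp hφ.contDiff)
  map_zero := by simp only [Function.comp_apply, hφ.map_zero, hf.map_zero, hψ.map_zero]
  fderiv_apply v := by
    rw [fderiv_comp_comp_zero hf.contDiff hf.map_zero hφ hψ, hφ', hf.fderiv_apply, hψ', mul_zero]
  fderiv_jacDet := by
    rw [fderiv_jacDet_comp_comp hf.contDiff hf.map_zero hφ hψ hf.jacDet_eq_zero,
      hf.fderiv_jacDet, ContinuousLinearMap.zero_comp, smul_zero]
  fderiv_fderiv_jacDet_apply v w := by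
    have hφd : jacDet φ 0 = 1 := by simp [jacDet, hφ']
    have hψd : jacDet ψ 0 = d := by simp [jacDet, hψ']
    rw [fderiv_fderiv_jacDet_comp_comp hf.contDiff hf.map_zero hφ hψ hf.jacDet_eq_zero
      hf.fderiv_jacDet, hφ', hφ', hf.fderiv_fderiv_jacDet_apply, hφd, hψd]
    ring

theorem isAdapted_fst_snd_pow_three : IsAdapted (fun p ↦ (p.1, p.2 ^ 3)) 6 := by
  have hsnd (p : ℝ × ℝ) : HasFDerivAt Prod.snd (ContinuousLinearMap.snd ℝ ℝ ℝ) p :=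
    hasFDerivAt_snd
  have hderiv (p : ℝ × ℝ) : HasFDerivAt (fun p : ℝ × ℝ ↦ (p.1, p.2 ^ 3))
      ((ContinuousLinearMap.fst ℝ ℝ ℝ).prod
        ((3 * p.2 ^ 2) • ContinuousLinearMap.snd ℝ ℝ ℝ)) p := by
    simpa using hasFDerivAt_fst.prodMk ((hsnd p).pow 3)
  have hjac : jacDet (fun p : ℝ × ℝ ↦ (p.1, p.2 ^ 3)) = fun p ↦ 3 * p.2 ^ 2 := by
    ext p
    simp [jacDet, (hderiv p).fderiv]
  have hjac' : fderiv ℝ (fun p : ℝ × ℝ ↦ 3 * p.2 ^ 2) =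
      fun p ↦ (6 * p.2) • ContinuousLinearMap.snd ℝ ℝ ℝ := by
    ext1 p
    rw [(((hsnd p).pow 2).const_mul 3).fderiv, smul_smul]
    norm_num [← mul_assoc]
  have hjac'' := ((hsnd 0).const_mul 6).smul_const (ContinuousLinearMap.snd ℝ ℝ ℝ)
  refine ⟨by fun_prop, by simp, fun v ↦ by simp [(hderiv 0).fderiv], ?_, fun v w ↦ ?_⟩
  · simp [hjac, hjac']
  · rw [hjac, hjac', hjac''.fderiv]
    simp [mul_assoc]

theorem isDegenerateCriticalAlong_of_jetEquiv (hf : ContDiff ℝ ∞ f) (hf0 : f 0 = 0)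
    (hjac : jacDet f 0 = 0) (he : e ≠ 0) (hnull : fderiv ℝ f 0 e = 0)
    (h : JetEquiv 3 f fun p ↦ (p.1, p.2 ^ 3)) : IsDegenerateCriticalAlong (jacDet f) e := by
  obtain ⟨φ, ψ, hφ, hψ, hjet⟩ := jetEquiv_iff.1 h
  have hF : IsAdapted (ψ ∘ f ∘ φ) 6 := isAdapted_fst_snd_pow_three.of_jetEq
    (hψ.contDiff.comp (hf.comp hφ.contDiff)) hjet
  obtain ⟨u, rfl⟩ := hφ.bijective_fderiv.surjective e
  have hu₁ : u.1 = 0 := by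
    have hnull' := fderiv_comp_comp_zero hf hf0 hφ hψ u
    rw [hF.fderiv_apply, hnull, map_zero] at hnull'
    exact congrArg Prod.fst hnull'
  have hu₂ : u.2 ≠ 0 := fun hu₂ ↦ he (by rw [show u = 0 from Prod.ext hu₁ hu₂, map_zero])
  exact (hF.isDegenerateCriticalAlong (by norm_num) hu₂).of_comp_comp hf hf0 hφ hψ hjac

end Recognition

section NormalForm

variable {f : ℝ × ℝ → ℝ × ℝ} {c : ℝ} {e : ℝ × ℝ}

theorem exists_continuousLinearEquiv_apply_eq_of_linearIndependent {k e : ℝ × ℝ}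
    (h : LinearIndependent ℝ ![k, e]) :
    ∃ P : (ℝ × ℝ) ≃L[ℝ] ℝ × ℝ, ∀ v, P v = v.1 • k + v.2 • e := by
  let P : ℝ × ℝ →ₗ[ℝ] ℝ × ℝ :=
    (LinearMap.fst ℝ ℝ ℝ).smulRight k + (LinearMap.snd ℝ ℝ ℝ).smulRight e
  have hP : Function.Injective P := by
    rw [injective_iff_map_eq_zero]
    intro v hv
    obtain ⟨h₁, h₂⟩ := LinearIndependent.pair_iff.1 h v.1 v.2 hv
    exact Prod.ext h₁ h₂
  exact ⟨(LinearEquiv.ofInjectiveEndo P hP).toContinuousLinearEquiv, fun v ↦ rfl⟩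

theorem IsDegenerateCriticalAlong.exists_continuousLinearEquiv {g : ℝ × ℝ → ℝ}
    (hg : ContDiff ℝ ∞ g) (h : IsDegenerateCriticalAlong g e) :
    ∃ P : (ℝ × ℝ) ≃L[ℝ] ℝ × ℝ, P (0, 1) = e ∧
      ∀ v w, fderiv ℝ (fderiv ℝ g) 0 (P v) (P w) =
        fderiv ℝ (fderiv ℝ g) 0 e e * (v.2 * w.2) := by
  obtain ⟨-, ⟨k, hk, hker⟩, hne⟩ := h
  have hindep : LinearIndependent ℝ ![k, e] := by
    refine LinearIndependent.pair_iff.2 fun s t hst ↦ ?_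
    have ht : t = 0 := by
      have hte : t * fderiv ℝ (fderiv ℝ g) 0 e e = 0 := by
        simpa [hker] using congr(fderiv ℝ (fderiv ℝ g) 0 $hst e)
      exact (mul_eq_zero.1 hte).resolve_right hne
    rw [ht, zero_smul, add_zero] at hst
    exact ⟨(smul_eq_zero.1 hst).resolve_right hk, ht⟩
  obtain ⟨P, hP⟩ := exists_continuousLinearEquiv_apply_eq_of_linearIndependent hindep
  have hsymm : fderiv ℝ (fderiv ℝ g) 0 e k = 0 := by
    have hg₂ := (contDiff_infty.1 hg 2).contDiffAt (x := 0)
    rw [(hg₂.isSymmSndFDerivAt (by simp)).eq e k, hker, zero_apply]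
  refine ⟨P, by rw [hP, zero_smul, one_smul, zero_add], fun v w ↦ ?_⟩
  simp only [hP, map_add, map_smul, hker, hsymm, smul_zero, zero_add, smul_apply, smul_eq_mul]
  ring

theorem exists_isAdapted_of_isDegenerateCriticalAlong (hf : ContDiff ℝ ∞ f) (hf0 : f 0 = 0)
    (hf' : fderiv ℝ f 0 ≠ 0) (hjac : jacDet f 0 = 0) (hnull : fderiv ℝ f 0 e = 0)
    (h : IsDegenerateCriticalAlong (jacDet f) e) :
    ∃ S P : (ℝ × ℝ) ≃L[ℝ] ℝ × ℝ, ∃ c ≠ 0, IsAdapted (S ∘ f ∘ P) c := by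
  obtain ⟨P, hPe, hP⟩ := h.exists_continuousLinearEquiv (contDiff_jacDet hf)
  have hfP (v : ℝ × ℝ) : fderiv ℝ f 0 (P v) = v.1 • fderiv ℝ f 0 (P (1, 0)) := by
    have hv : v = v.1 • ((1, 0) : ℝ × ℝ) + v.2 • ((0, 1) : ℝ × ℝ) := by simp
    conv_lhs => rw [hv, map_add, map_smul, map_smul, hPe, map_add, map_smul, map_smul, hnull,
      smul_zero, add_zero]
  have hfP₁ : fderiv ℝ f 0 (P (1, 0)) ≠ 0 := fun h₀ ↦ hf' <| ContinuousLinearMap.ext fun w ↦ by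
    rw [← P.apply_symm_apply w, hfP, h₀, smul_zero, zero_apply]
  obtain ⟨S, hS⟩ := SeparatingDual.exists_continuousLinearEquiv_apply_eq (R := ℝ) hfP₁
    (show ((1, 0) : ℝ × ℝ) ≠ 0 by simp)
  have hPg := isDiffeoGerm_of_continuousLinearEquiv P
  have hSg := isDiffeoGerm_of_continuousLinearEquiv S
  have hunit := mul_ne_zero hSg.jacDet_ne_zero hPg.jacDet_ne_zero
  refine ⟨S, P, _, mul_ne_zero hunit h.apply_ne_zero,
    hSg.contDiff.comp (hf.comp hPg.contDiff), by simp [hf0], fun v ↦ ?_, ?_, fun v w ↦ ?_⟩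
  · rw [fderiv_comp_comp_zero hf hf0 hPg hSg, P.fderiv, S.fderiv,
      ContinuousLinearEquiv.coe_coe, ContinuousLinearEquiv.coe_coe, hfP, map_smul, hS]
    simp
  · rw [fderiv_jacDet_comp_comp hf hf0 hPg hSg hjac, h.fderiv_eq_zero,
      ContinuousLinearMap.zero_comp, smul_zero]
  · rw [fderiv_fderiv_jacDet_comp_comp hf hf0 hPg hSg hjac h.fderiv_eq_zero, P.fderiv,
      ContinuousLinearEquiv.coe_coe, hP, ← mul_assoc]

theorem IsAdapted.exists_comp_fst_eq (hf : IsAdapted f c) :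
    ∃ χ, IsDiffeoGerm χ ∧ IsAdapted (f ∘ χ) c ∧ ∀ᶠ p in 𝓝 (0 : ℝ × ℝ), (f (χ p)).1 = p.1 := by
  have hΘ : HasFDerivAt (fun p ↦ ((f p).1, p.2))
      (ContinuousLinearEquiv.refl ℝ (ℝ × ℝ) : ℝ × ℝ →L[ℝ] ℝ × ℝ) 0 := by
    have hfd := (hf.contDiff.differentiable (by simp) 0).hasFDerivAt
    refine (hfd.fst.prodMk hasFDerivAt_snd).congr_fderiv (ContinuousLinearMap.ext fun v ↦ ?_)
    simp [hf.fderiv_apply]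
  obtain ⟨χ, hχ, hχ0, hχ', hright⟩ :=
    exists_contDiff_rightInverse (n := ⊤) (by simp) (hf.contDiff.fst.prodMk contDiff_snd) hΘ
  simp only [hf.map_zero, Prod.fst_zero, Prod.snd_zero, Prod.mk_zero_zero] at hχ0 hχ' hright
  have hχ_apply (v : ℝ × ℝ) : fderiv ℝ χ 0 v = v := congr($(hχ'.fderiv) v)
  have hχ_germ : IsDiffeoGerm χ :=
    ⟨hχ, hχ0, (funext hχ_apply : ⇑(fderiv ℝ χ 0) = id) ▸ Function.bijective_id⟩
  refine ⟨χ, hχ_germ, ?_, hright.mono fun p hp ↦ congr($hp.1)⟩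
  simpa using hf.comp_comp (d := 1) hχ_germ isDiffeoGerm_id hχ_apply (by simp)

theorem fderiv_shear_apply {u : ℝ → ℝ} (hu : HasDerivAt u 0 0) (d : ℝ) (v : ℝ × ℝ) :
    fderiv ℝ (fun p : ℝ × ℝ ↦ (p.1, d * (p.2 - u p.1))) 0 v = (v.1, d * v.2) := by
  have hfst : HasFDerivAt Prod.fst (ContinuousLinearMap.fst ℝ ℝ ℝ) 0 := hasFDerivAt_fst
  have hsnd : HasFDerivAt Prod.snd (ContinuousLinearMap.snd ℝ ℝ ℝ) 0 := hasFDerivAt_snd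
  have hufst : HasFDerivAt (fun p : ℝ × ℝ ↦ u p.1) (0 : ℝ × ℝ →L[ℝ] ℝ) 0 :=
    (HasDerivAt.comp_hasFDerivAt (0 : ℝ × ℝ) hu hfst).congr_fderiv (zero_smul _ _)
  have hshear := hfst.prodMk ((hsnd.fun_sub hufst).const_mul d)
  rw [hshear.fderiv]
  simp

theorem isDiffeoGerm_shear {u : ℝ → ℝ} {d : ℝ} (hu : ContDiff ℝ ∞ u) (hu0 : u 0 = 0)
    (hu' : HasDerivAt u 0 0) (hd : d ≠ 0) :
    IsDiffeoGerm fun p : ℝ × ℝ ↦ (p.1, d * (p.2 - u p.1)) := by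
  refine ⟨by fun_prop, by simp [hu0], ?_⟩
  rw [← jacDet_ne_zero_iff]
  simpa [jacDet, fderiv_shear_apply hu'] using hd

theorem IsAdapted.jetEquiv_of_fst_eq (hf : IsAdapted f c) (hc : c ≠ 0)
    (hfst : ∀ᶠ p in 𝓝 (0 : ℝ × ℝ), (f p).1 = p.1) : JetEquiv 3 f fun p ↦ (p.1, p.2 ^ 3) := by
  let u (t : ℝ) : ℝ := (f (t, 0)).2
  have hu : ContDiff ℝ ∞ u := (hf.contDiff.comp (contDiff_id.prodMk contDiff_const)).snd
  have hu' : HasDerivAt u 0 0 := by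
    have hline : HasDerivAt (fun t : ℝ ↦ (t, (0 : ℝ))) (1, 0) 0 :=
      (hasDerivAt_id (0 : ℝ)).prodMk (hasDerivAt_const 0 0)
    have hfd : HasFDerivAt f (fderiv ℝ f 0) ((0 : ℝ), (0 : ℝ)) :=
      (hf.contDiff.differentiable (by simp) 0).hasFDerivAt
    exact (hfd.snd.comp_hasDerivAt (f := fun t : ℝ ↦ (t, (0 : ℝ))) 0 hline).congr_deriv
      congr($(hf.fderiv_apply (1, 0)).2)
  -- Subtracting `u` makes the second component vanish on the axis `y = 0`, as in `(x, y³)`, and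
  -- the factor `6 / c` turns the Hessian `c dy²` of the Jacobian determinant into that of `3 y²`.
  have hψ := isDiffeoGerm_shear hu congr($(hf.map_zero).2) hu'
    (div_ne_zero (by norm_num : (6 : ℝ) ≠ 0) hc)
  have hF := hf.comp_comp isDiffeoGerm_id hψ (by simp) (fderiv_shear_apply hu' (6 / c))
  rw [div_mul_cancel₀ _ hc] at hF
  have hmodel := isAdapted_fst_snd_pow_three
  refine jetEquiv_iff.2 ⟨id, _, isDiffeoGerm_id, hψ, ?_⟩
  refine jetEq_succ_of_jacDet hF.contDiff hmodel.contDiff hfst (.of_forall fun _ ↦ rfl) ?_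
    (hF.jetEq_jacDet hmodel)
  have haxis : Tendsto (fun t : ℝ ↦ (t, (0 : ℝ))) (𝓝 0) (𝓝 0) :=
    (Continuous.prodMk_left 0).tendsto' 0 0 rfl
  filter_upwards [haxis.eventually hfst] with t ht
  simp [u, ht]

theorem IsAdapted.jetEquiv (hf : IsAdapted f c) (hc : c ≠ 0) :
    JetEquiv 3 f fun p ↦ (p.1, p.2 ^ 3) := by
  obtain ⟨χ, hχ, hfχ, hfst⟩ := hf.exists_comp_fst_eq
  exact (hfχ.jetEquiv_of_fst_eq hc hfst).of_comp_comp (ψ := id) hχ isDiffeoGerm_id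

end NormalForm

theorem stmt14_general (f η : ℝ × ℝ → ℝ × ℝ)
    (hf : ContDiff ℝ ∞ f) (hf0 : f 0 = 0) (hcr : CorankOne f)
    (hη : DifferentiableAt ℝ η 0) (hη0 : η 0 ≠ 0) (hnull : fderiv ℝ f 0 (η 0) = 0) :
    JetEquiv 3 f (fun p => (p.1, p.2 ^ 3)) ↔
      (fderiv ℝ (jacDet f) 0 = 0 ∧ (hess (jacDet f)).rank = 1 ∧
        etaIter η 2 (jacDet f) 0 ≠ 0) := by
  have hjac := hcr.jacDet_eq_zero
  have hjac' : DifferentiableAt ℝ (fderiv ℝ (jacDet f)) 0 :=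
    ((contDiff_jacDet hf).fderiv_right (m := ∞) le_rfl).differentiable (by simp) 0
  rw [← isDegenerateCriticalAlong_iff hjac' hη]
  refine ⟨isDegenerateCriticalAlong_of_jetEquiv hf hf0 hjac hη0 hnull, fun h ↦ ?_⟩
  obtain ⟨S, P, c, hc, hSfP⟩ :=
    exists_isAdapted_of_isDegenerateCriticalAlong hf hf0 hcr.fderiv_ne_zero hjac hnull h
  exact (hSfP.jetEquiv hc).of_comp_comp (isDiffeoGerm_of_continuousLinearEquiv P)
    (isDiffeoGerm_of_continuousLinearEquiv S)

theorem stmt14 (f η : ℝ × ℝ → ℝ × ℝ)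
    (hf : ContDiff ℝ (⊤ : ℕ∞) f) (hf0 : f 0 = 0) (hcr : CorankOne f)
    (hη : IsNullVF f η) :
    JetEquiv 3 f (fun p => (p.1, p.2 ^ 3)) ↔
      (fderiv ℝ (jacDet f) 0 = 0 ∧ (hess (jacDet f)).rank = 1 ∧
        etaIter η 2 (jacDet f) 0 ≠ 0) := by
  exact stmt14_general f η hf hf0 hcr hη.differentiableAt hη.1 (hη.fderiv_apply_zero hcr)
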